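/- arXiv:1010.0512 — 2 statements merged into one kernel-verified Lean document; each statement's English description precedes it below -/
import Mathlib

section
/- Let T be a triangle in ℝ² with vertices in the lattice ℤ², and let r ∈ ℤ², r ≠ 0. Define χ_T(x) := lim_{ρ→0} |T ∩ B_ρ(x)| / |B_ρ(x)| (which exists for every x). Then the sum over all i ∈ ℤ² of the bond average ⨍_{(i,i+r)} χ_T db equals the area |T|, where ⨍_{(i,i+r)} f db := ∫₀¹ f((1-λ)i + λ(i+r)) dλ. -/
open MeasureTheory Filter

/-- Embedding of the lattice `ℤ²` into `ℝ²`. -/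
noncomputable def c2 (i : ℤ × ℤ) : ℝ × ℝ := ((i.1 : ℝ), (i.2 : ℝ))

theorem c2_add (i j : ℤ × ℤ) : c2 (i + j) = c2 i + c2 j := by
  ext <;> simp [c2]

theorem c2_sub (i j : ℤ × ℤ) : c2 (i - j) = c2 i - c2 j := by
  ext <;> simp [c2]

theorem volume_line_eq_zero {p q : ℝ} (h : p ≠ 0 ∨ q ≠ 0) (t : ℝ) :
    volume {x : ℝ × ℝ | p * x.1 + q * x.2 = t} = 0 := by
  have hm : MeasurableSet {x : ℝ × ℝ | p * x.1 + q * x.2 = t} :=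
    measurableSet_eq_fun (by fun_prop) (by fun_prop)
  rw [Measure.volume_eq_prod, Measure.measure_prod_null hm]
  by_cases hq : q = 0
  · subst hq
    have hp : p ≠ 0 := by simpa using h
    have : ∀ᵐ x : ℝ, x ≠ t / p := by simp [ae_iff]
    filter_upwards [this] with x hx
    have : Prod.mk x ⁻¹' {x : ℝ × ℝ | p * x.1 + 0 * x.2 = t} = ∅ := by
      ext y
      simp only [Set.mem_preimage, Set.mem_ofPred_eq, zero_mul, add_zero, Set.mem_empty_iff_false,
        iff_false]
      rintro rfl
      exact hx (by field_simp)
    rw [this, measure_empty, Pi.zero_apply]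
  · refine Eventually.of_forall fun x => measure_mono_null (t := {(t - p * x) / q}) ?_ (by simp)
    intro y hy
    simp only [Set.mem_preimage, Set.mem_ofPred_eq] at hy
    simp only [Set.mem_singleton_iff]
    field_simp
    linarith

theorem tsum_volume_inter_cells {a b : ℝ × ℝ → ℝ} (ha : Measurable a) (hb : Measurable b)
    (A : Set (ℝ × ℝ)) :
    ∑' m : ℤ × ℤ, volume ({z | ⌊a z⌋ = m.1 ∧ ⌊b z⌋ = m.2} ∩ A) = volume A := by
  have hf : Measurable fun z => (⌊a z⌋, ⌊b z⌋) := (ha.floor).prodMk (hb.floor)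
  have h := tsum_measure_preimage_singleton (μ := volume.restrict A) (s := Set.univ)
    (Set.to_countable _) (f := fun z => (⌊a z⌋, ⌊b z⌋)) fun y _ => hf (measurableSet_singleton y)
  rw [tsum_univ (fun m => volume.restrict A ((fun z => (⌊a z⌋, ⌊b z⌋)) ⁻¹' {m}))] at h
  simp only [Set.preimage_univ, Measure.restrict_apply_univ] at h
  rw [← h]
  refine tsum_congr fun m => ?_
  rw [Measure.restrict_apply (hf (measurableSet_singleton m))]
  congr 1
  ext z
  simp [Prod.ext_iff]

theorem volume_sub_left_preimage (c : ℝ × ℝ) (A : Set (ℝ × ℝ)) :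
    volume ((fun z => c - z) ⁻¹' A) = volume A :=
  (Measure.measurePreserving_sub_left volume c).measure_preimage_equiv (f := MeasurableEquiv.subLeft c) A

/-- A triangle and its point reflection `z ↦ c - z` together tile the plane under the lattice
`w`. Here `a`, `b` are the affine coordinates that turn the triangle into the standard one. -/
theorem tsum_volume_triangle_inter_ball {a b : ℝ × ℝ → ℝ} (ha : Measurable a) (hb : Measurable b)
    (ha0 : ∀ t, volume {z | a z = t} = 0) (hb0 : ∀ t, volume {z | b z = t} = 0)
    (hab0 : volume {z | a z + b z = 1} = 0) {c : ℝ × ℝ} (hac : ∀ z, a (c - z) = 1 - a z)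
    (hbc : ∀ z, b (c - z) = 1 - b z) {w : ℤ × ℤ → ℝ × ℝ} (haw : ∀ z m, a (z + w m) = a z + m.1)
    (hbw : ∀ z m, b (z + w m) = b z + m.2) {T : Set (ℝ × ℝ)}
    (hT : T = {z | 0 ≤ a z ∧ 0 ≤ b z ∧ a z + b z ≤ 1}) (x : ℝ × ℝ) (ρ : ℝ) :
    ∑' m, (volume (T ∩ Metric.ball (x + w m) ρ) + volume (T ∩ Metric.ball (c - (x + w m)) ρ))
      = volume (Metric.ball x ρ) := by
  have hTm : MeasurableSet T := by
    rw [hT]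
    exact (measurableSet_le measurable_const ha).inter
      ((measurableSet_le measurable_const hb).inter (measurableSet_le (ha.add hb) measurable_const))
  rw [← tsum_volume_inter_cells ha hb (Metric.ball x ρ), ← (Equiv.neg (ℤ × ℤ)).tsum_eq
    fun m => volume ({z | ⌊a z⌋ = m.1 ∧ ⌊b z⌋ = m.2} ∩ Metric.ball x ρ)]
  refine tsum_congr fun m => ?_
  have hrefl : volume (T ∩ Metric.ball (c - (x + w m)) ρ)
      = volume ((fun z => c - z) ⁻¹' T ∩ Metric.ball (x + w m) ρ) := by
    rw [← volume_sub_left_preimage c (T ∩ Metric.ball (c - (x + w m)) ρ), Set.preimage_inter]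
    congr 2
    ext z
    simp [dist_eq_norm, norm_sub_rev]
  have hcell : volume ({z | ⌊a z⌋ = (Equiv.neg (ℤ × ℤ) m).1 ∧ ⌊b z⌋ = (Equiv.neg (ℤ × ℤ) m).2}
        ∩ Metric.ball x ρ)
      = volume ({z | ⌊a z⌋ = 0 ∧ ⌊b z⌋ = 0} ∩ Metric.ball (x + w m) ρ) := by
    rw [← measure_preimage_add_right volume (w m)
      ({z | ⌊a z⌋ = 0 ∧ ⌊b z⌋ = 0} ∩ Metric.ball (x + w m) ρ)]
    congr 1
    ext z
    simp only [Set.mem_inter_iff, Set.mem_preimage, Set.mem_ofPred_eq, haw, hbw, Int.floor_add_intCast,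
      Metric.mem_ball, dist_add_right, Equiv.neg_apply, Prod.fst_neg, Prod.snd_neg,
      eq_neg_iff_add_eq_zero]
  rw [hrefl, hcell, ← measure_union₀']
  · refine measure_congr ?_
    have h1 : ∀ᵐ z, a z ≠ 1 := by simpa [ae_iff] using ha0 1
    have h2 : ∀ᵐ z, b z ≠ 1 := by simpa [ae_iff] using hb0 1
    have h3 : ∀ᵐ z, a z ≠ 0 := by simpa [ae_iff] using ha0 0
    have h4 : ∀ᵐ z, b z ≠ 0 := by simpa [ae_iff] using hb0 0
    filter_upwards [h1, h2, h3, h4] with z h1 h2 h3 h4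
    apply propext
    change (z ∈ T ∧ z ∈ Metric.ball (x + w m) ρ ∨ c - z ∈ T ∧ z ∈ Metric.ball (x + w m) ρ) ↔
      (⌊a z⌋ = 0 ∧ ⌊b z⌋ = 0) ∧ z ∈ Metric.ball (x + w m) ρ
    rw [← or_and_right]
    refine and_congr_left' ?_
    rw [hT]
    simp only [Set.mem_ofPred_eq, hac, hbc, Int.floor_eq_zero_iff, Set.mem_Ico]
    constructor
    · rintro (⟨p, q, s⟩ | ⟨p, q, s⟩)
      · exact ⟨⟨p, lt_of_le_of_ne (by linarith) h1⟩, ⟨q, lt_of_le_of_ne (by linarith) h2⟩⟩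
      · exact ⟨⟨by linarith, lt_of_le_of_ne (by linarith) h1⟩,
          ⟨by linarith, lt_of_le_of_ne (by linarith) h2⟩⟩
    · rintro ⟨⟨p, p'⟩, ⟨q, q'⟩⟩
      rcases le_total (a z + b z) 1 with h | h
      · exact Or.inl ⟨p, q, h⟩
      · exact Or.inr ⟨by linarith, by linarith, by linarith⟩
  · exact (hTm.inter measurableSet_ball).nullMeasurableSet
  · refine measure_mono_null ?_ hab0
    rintro z ⟨⟨h1, -⟩, ⟨h2, -⟩⟩
    rw [hT] at h1 h2
    simp only [Set.mem_preimage, Set.mem_ofPred_eq, hac, hbc] at h1 h2 ⊢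
    linarith [h1.2.2, h2.2.2]

/-- Summation over a group in terms of the orbits of a subgroup, given as the image of an
injective homomorphism. -/
theorem tsum_eq_card_quotient_mul {G H : Type*} [AddCommGroup G] [AddGroup H] (w : H →+ G)
    (hw : Function.Injective w) {f : G → ENNReal} {M : ENNReal}
    (hf : ∀ i, ∑' m, f (i + w m) = M) :
    ∑' i, f i = (∑' _ : G ⧸ w.range, (1 : ENNReal)) * M := by
  rw [← (Equiv.sigmaFiberEquiv (QuotientAddGroup.mk : G → G ⧸ w.range)).tsum_eq,
    ENNReal.tsum_sigma', ← ENNReal.tsum_mul_right]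
  refine tsum_congr fun q => ?_
  have hq : ∀ m, (QuotientAddGroup.mk (q.out + w m) : G ⧸ w.range) = q := fun m => by
    rw [QuotientAddGroup.mk_add_of_mem _ (AddMonoidHom.mem_range.2 ⟨m, rfl⟩)]
    exact Quotient.out_eq' q
  have hb : Function.Bijective
      fun m => (⟨q.out + w m, hq m⟩ : {i : G // (QuotientAddGroup.mk i : G ⧸ w.range) = q}) := by
    constructor
    · intro m n h
      exact hw (add_left_cancel (congrArg Subtype.val h))
    · rintro ⟨i, hi⟩
      have : -q.out + i ∈ w.range := by
        rw [← QuotientAddGroup.eq, hi]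
        exact Quotient.out_eq' q
      obtain ⟨m, hm⟩ := this
      exact ⟨m, Subtype.ext (by simp [hm])⟩
  rw [← (Equiv.ofBijective _ hb).tsum_eq, one_mul]
  exact hf q.out

theorem tsum_volume_inter_ball_half (T : Set (ℝ × ℝ)) :
    ∑' i : ℤ × ℤ, volume (T ∩ Metric.ball (c2 i) (1 / 2)) = volume T := by
  rw [← tsum_volume_inter_cells (a := fun z => z.1 + 1 / 2) (b := fun z => z.2 + 1 / 2)
    (by fun_prop) (by fun_prop) T]
  refine tsum_congr fun i => measure_congr ?_
  have h1 : ∀ᵐ z : ℝ × ℝ, z.1 ≠ i.1 - 1 / 2 := by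
    simpa [ae_iff] using volume_line_eq_zero (p := 1) (q := 0) (by simp) (i.1 - 1 / 2)
  have h2 : ∀ᵐ z : ℝ × ℝ, z.2 ≠ i.2 - 1 / 2 := by
    simpa [ae_iff] using volume_line_eq_zero (p := 0) (q := 1) (by simp) (i.2 - 1 / 2)
  filter_upwards [h1, h2] with z h1 h2
  apply propext
  change (z ∈ T ∧ z ∈ Metric.ball (c2 i) (1 / 2)) ↔
    ((⌊z.1 + 1 / 2⌋ = i.1 ∧ ⌊z.2 + 1 / 2⌋ = i.2) ∧ z ∈ T)
  rw [and_comm]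
  refine and_congr_left' ?_
  simp only [Metric.mem_ball, Prod.dist_eq, Real.dist_eq, c2, max_lt_iff, abs_lt, Int.floor_eq_iff]
  constructor
  · rintro ⟨⟨p, q⟩, ⟨s, t⟩⟩
    exact ⟨⟨by linarith, by linarith⟩, ⟨by linarith, by linarith⟩⟩
  · rintro ⟨⟨p, q⟩, ⟨s, t⟩⟩
    have h1' := lt_of_le_of_ne (by linarith : (i.1 : ℝ) - 1 / 2 ≤ z.1) h1.symm
    have h2' := lt_of_le_of_ne (by linarith : (i.2 : ℝ) - 1 / 2 ≤ z.2) h2.symm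
    exact ⟨⟨by linarith, by linarith⟩, ⟨by linarith, by linarith⟩⟩

theorem det_ne_zero_of_affineIndependent {P Q S : ℝ × ℝ} (h : AffineIndependent ℝ ![P, Q, S]) :
    (Q.1 - P.1) * (S.2 - P.2) - (Q.2 - P.2) * (S.1 - P.1) ≠ 0 := by
  intro hd
  have key : ∀ s t : ℝ, s * (Q.1 - P.1) + t * (S.1 - P.1) = 0 →
      s * (Q.2 - P.2) + t * (S.2 - P.2) = 0 → s = 0 ∧ t = 0 := by
    intro s t h1 h2
    have := affineIndependent_iff.1 h Finset.univ ![-(s + t), s, t]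
      (by simp [Fin.sum_univ_three])
      (by
        ext
        · simp [Fin.sum_univ_three]; linarith
        · simp [Fin.sum_univ_three]; linarith)
    exact ⟨by simpa using this 1 (Finset.mem_univ _), by simpa using this 2 (Finset.mem_univ _)⟩
  obtain ⟨h1, h2⟩ := key (S.1 - P.1) (-(Q.1 - P.1)) (by ring) (by linarith)
  obtain ⟨h3, h4⟩ := key (S.2 - P.2) (-(Q.2 - P.2)) (by linarith) (by ring)
  have := key 1 0 (by linarith) (by linarith)
  norm_num at this

theorem convexHull_triangle_eq {P Q S : ℝ × ℝ} {a b : ℝ × ℝ → ℝ}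
    (hconv : Convex ℝ {z | 0 ≤ a z ∧ 0 ≤ b z ∧ a z + b z ≤ 1})
    (haP : a P = 0) (hbP : b P = 0) (haQ : a Q = 1) (hbQ : b Q = 0) (haS : a S = 0) (hbS : b S = 1)
    (hz : ∀ z, z = (1 - a z - b z) • P + a z • Q + b z • S) :
    convexHull ℝ {P, Q, S} = {z | 0 ≤ a z ∧ 0 ≤ b z ∧ a z + b z ≤ 1} := by
  apply subset_antisymm
  · refine convexHull_min ?_ hconv
    rintro z (rfl | rfl | rfl) <;> simp only [Set.mem_ofPred_eq, haP, hbP, haQ, hbQ, haS, hbS] <;> norm_num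
  · rintro z ⟨h1, h2, h3⟩
    rw [hz z]
    have hsub := subset_convexHull ℝ ({P, Q, S} : Set (ℝ × ℝ))
    have := (convex_convexHull ℝ ({P, Q, S} : Set (ℝ × ℝ))).sum_mem (t := Finset.univ)
      (w := ![1 - a z - b z, a z, b z]) (z := ![P, Q, S])
      (by intro i _; fin_cases i <;> simp <;> linarith) (by simp [Fin.sum_univ_three]; ring)
      (by intro i _; fin_cases i <;> exact hsub (by simp))
    simpa [Fin.sum_univ_three] using this

/-- The lattice sum of ball densities of a lattice triangle, symmetrized under `y ↦ -y`, does not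
depend on the point `y`. -/
theorem tsum_volume_inter_ball_add_neg {P Q S : ℤ × ℤ}
    (hind : AffineIndependent ℝ ![c2 P, c2 Q, c2 S]) {T : Set (ℝ × ℝ)}
    (hT : T = convexHull ℝ {c2 P, c2 Q, c2 S}) (y : ℝ × ℝ) (ρ : ℝ) :
    ∑' i, volume (T ∩ Metric.ball (y + c2 i) ρ) + ∑' i, volume (T ∩ Metric.ball (-y + c2 i) ρ)
      = 2 * volume T * volume (Metric.ball (0 : ℝ × ℝ) ρ) := by
  have hd := det_ne_zero_of_affineIndependent hind
  set d : ℝ := ((c2 Q).1 - (c2 P).1) * ((c2 S).2 - (c2 P).2)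
    - ((c2 Q).2 - (c2 P).2) * ((c2 S).1 - (c2 P).1) with hd_def
  set a : ℝ × ℝ → ℝ := fun z => ((z.1 - (c2 P).1) * ((c2 S).2 - (c2 P).2)
    - (z.2 - (c2 P).2) * ((c2 S).1 - (c2 P).1)) / d with ha
  set b : ℝ × ℝ → ℝ := fun z => (((c2 Q).1 - (c2 P).1) * (z.2 - (c2 P).2)
    - ((c2 Q).2 - (c2 P).2) * (z.1 - (c2 P).1)) / d with hb
  have ha_line : ∀ t, volume {z | a z = t} = 0 := by
    intro t
    convert volume_line_eq_zero (p := (c2 S).2 - (c2 P).2) (q := -((c2 S).1 - (c2 P).1)) ?_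
      (t * d + (c2 P).1 * ((c2 S).2 - (c2 P).2) - (c2 P).2 * ((c2 S).1 - (c2 P).1)) using 4 with z
    · simp only [ha, div_eq_iff hd]
      constructor <;> intro h <;> linarith
    · by_contra! h
      exact hd (by rw [hd_def]; linear_combination ((c2 Q).1 - (c2 P).1) * h.1
        + ((c2 Q).2 - (c2 P).2) * h.2)
  have hb_line : ∀ t, volume {z | b z = t} = 0 := by
    intro t
    convert volume_line_eq_zero (p := -((c2 Q).2 - (c2 P).2)) (q := ((c2 Q).1 - (c2 P).1)) ?_
      (t * d + (c2 P).2 * ((c2 Q).1 - (c2 P).1) - (c2 P).1 * ((c2 Q).2 - (c2 P).2)) using 4 with z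
    · simp only [hb, div_eq_iff hd]
      constructor <;> intro h <;> linarith
    · by_contra! h
      exact hd (by rw [hd_def]; linear_combination ((c2 S).2 - (c2 P).2) * h.2
        + ((c2 S).1 - (c2 P).1) * h.1)
  have hab_line : volume {z | a z + b z = 1} = 0 := by
    convert volume_line_eq_zero (p := (c2 S).2 - (c2 Q).2) (q := (c2 Q).1 - (c2 S).1) ?_
      (d + (c2 P).1 * ((c2 S).2 - (c2 Q).2) + (c2 P).2 * ((c2 Q).1 - (c2 S).1)) using 4 with z
    · simp only [ha, hb, ← add_div, div_eq_iff hd]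
      constructor <;> intro h <;> linarith
    · by_contra! h
      exact hd (by rw [hd_def]; linear_combination ((c2 Q).1 - (c2 P).1) * h.1
        + ((c2 Q).2 - (c2 P).2) * h.2)
  have hTab : T = {z | 0 ≤ a z ∧ 0 ≤ b z ∧ a z + b z ≤ 1} := by
    rw [hT]
    apply convexHull_triangle_eq
    · have hlin : ∀ x y (s t : ℝ), s + t = 1 →
          a (s • x + t • y) = s * a x + t * a y ∧ b (s • x + t • y) = s * b x + t * b y := by
        intro x y s t h
        obtain rfl : s = 1 - t := by linarith
        constructor <;> simp only [ha, hb, Prod.fst_add, Prod.snd_add, Prod.smul_fst,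
          Prod.smul_snd, smul_eq_mul] <;> ring
      rintro x ⟨h1, h2, h3⟩ y ⟨k1, k2, k3⟩ s t hs ht hst
      obtain ⟨e1, e2⟩ := hlin x y s t hst
      simp only [Set.mem_ofPred_eq, e1, e2]
      refine ⟨by positivity, by positivity, ?_⟩
      nlinarith
    · simp [ha]
    · simp [hb]
    · simp only [ha]; exact div_self hd
    · simp only [hb]; ring
    · simp only [ha]; ring
    · simp only [hb]; exact div_self hd
    · intro z
      ext <;> simp only [ha, hb, Prod.fst_add, Prod.snd_add, Prod.smul_fst, Prod.smul_snd,
        smul_eq_mul] <;> field_simp <;> rw [hd_def] <;> ring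
  let w : ℤ × ℤ →+ ℤ × ℤ :=
    { toFun := fun m => m.1 • (Q - P) + m.2 • (S - P)
      map_zero' := by simp
      map_add' := fun m n => by simp only [Prod.fst_add, Prod.snd_add, add_smul]; abel }
  have hw1 : ∀ m, (c2 (w m)).1 = m.1 * ((c2 Q).1 - (c2 P).1) + m.2 * ((c2 S).1 - (c2 P).1) := by
    intro m; simp [w, c2]
  have hw2 : ∀ m, (c2 (w m)).2 = m.1 * ((c2 Q).2 - (c2 P).2) + m.2 * ((c2 S).2 - (c2 P).2) := by
    intro m; simp [w, c2]
  have haw : ∀ z m, a (z + c2 (w m)) = a z + m.1 := by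
    intro z m
    simp only [ha, Prod.fst_add, Prod.snd_add, hw1, hw2]
    field_simp
    rw [hd_def]; ring
  have hbw : ∀ z m, b (z + c2 (w m)) = b z + m.2 := by
    intro z m
    simp only [hb, Prod.fst_add, Prod.snd_add, hw1, hw2]
    field_simp
    rw [hd_def]; ring
  have hwinj : Function.Injective w := by
    intro m n h
    have h1 := (haw 0 m).symm.trans ((congrArg (fun k => a (0 + c2 k)) h).trans (haw 0 n))
    have h2 := (hbw 0 m).symm.trans ((congrArg (fun k => b (0 + c2 k)) h).trans (hbw 0 n))
    exact Prod.ext (by exact_mod_cast add_left_cancel h1) (by exact_mod_cast add_left_cancel h2)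
  have hac : ∀ z, a (c2 (Q + S) - z) = 1 - a z := by
    intro z
    simp only [ha, c2_add, Prod.fst_sub, Prod.snd_sub, Prod.fst_add, Prod.snd_add]
    field_simp
    rw [hd_def]; ring
  have hbc : ∀ z, b (c2 (Q + S) - z) = 1 - b z := by
    intro z
    simp only [hb, c2_add, Prod.fst_sub, Prod.snd_sub, Prod.fst_add, Prod.snd_add]
    field_simp
    rw [hd_def]; ring
  have hsum : ∀ (y : ℝ × ℝ) (ρ : ℝ),
      ∑' i, volume (T ∩ Metric.ball (y + c2 i) ρ) + ∑' i, volume (T ∩ Metric.ball (-y + c2 i) ρ)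
        = (∑' _ : (ℤ × ℤ) ⧸ w.range, (1 : ENNReal)) * volume (Metric.ball (0 : ℝ × ℝ) ρ) := by
    intro y ρ
    rw [← (Equiv.subLeft (Q + S)).tsum_eq fun i => volume (T ∩ Metric.ball (-y + c2 i) ρ),
      ← ENNReal.tsum_add]
    refine tsum_eq_card_quotient_mul w hwinj fun i => ?_
    rw [← Measure.addHaar_ball_center volume (y + c2 i),
      ← tsum_volume_triangle_inter_ball (by fun_prop) (by fun_prop) ha_line hb_line hab_line hac
      hbc haw hbw hTab (y + c2 i) ρ]
    refine tsum_congr fun m => ?_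
    rw [Equiv.subLeft_apply, c2_sub, c2_add i, add_assoc]
    congr 4
    abel
  rw [hsum]
  congr 1
  have h := hsum 0 (1 / 2)
  simp only [neg_zero, zero_add, tsum_volume_inter_ball_half] at h
  have hball : volume (Metric.ball (0 : ℝ × ℝ) (1 / 2)) = 1 := by
    rw [← Prod.mk_zero_zero, ← ball_prod_same, Measure.volume_eq_prod, Measure.prod_prod]
    simp
  rw [hball, mul_one] at h
  rw [← h, two_mul]

theorem measurable_volume_inter_ball {T : Set (ℝ × ℝ)} (hT : MeasurableSet T) (ρ : ℝ) :
    Measurable fun x => volume (T ∩ Metric.ball x ρ) := by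
  have hs : MeasurableSet {p : (ℝ × ℝ) × (ℝ × ℝ) | p.2 ∈ T ∧ dist p.2 p.1 < ρ} :=
    (measurable_snd hT).inter
      (measurableSet_lt (measurable_snd.dist measurable_fst) measurable_const)
  exact measurable_measure_prodMk_left hs

/-- Two-dimensional bond-density lemma: let `T` be a (nondegenerate) triangle in `ℝ²` with
vertices in the lattice `ℤ²`, let `r ∈ ℤ²`, `r ≠ 0`, and let `χ` be the density function of `T`,
i.e. `χ x = lim_{ρ→0} |T ∩ B_ρ(x)| / |B_ρ(x)|` (the limit is assumed to exist for every `x`).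
Then the sum over all `i ∈ ℤ²` of the bond averages `⨍_{(i,i+r)} χ db` equals the area `|T|`,
where `⨍_{(i,i+r)} f db = ∫₀¹ f((1-λ) i + λ (i+r)) dλ`. -/
theorem bond_density_2d (P Q S : ℤ × ℤ)
    (hind : AffineIndependent ℝ ![c2 P, c2 Q, c2 S])
    (T : Set (ℝ × ℝ)) (hT : T = convexHull ℝ {c2 P, c2 Q, c2 S})
    (r : ℤ × ℤ) (hr : r ≠ 0)
    (χ : ℝ × ℝ → ℝ)
    (hχ : ∀ x : ℝ × ℝ,
      Tendsto (fun ρ : ℝ =>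
          (volume (T ∩ Metric.ball x ρ)).toReal / (volume (Metric.ball x ρ)).toReal)
        (nhdsWithin 0 (Set.Ioi (0:ℝ))) (nhds (χ x))) :
    ∑' i : ℤ × ℤ, ∫ l in (0:ℝ)..1, χ ((1 - l) • c2 i + l • c2 (i + r))
      = (volume T).toReal := by
  have hTc : IsCompact T := by
    rw [hT]; exact (Set.toFinite _).isCompact_convexHull (𝕜 := ℝ)
  have hTm : MeasurableSet T := hTc.measurableSet
  have hTfin : volume T ≠ ⊤ := hTc.measure_ne_top
  have hχm : Measurable χ := by
    refine measurable_of_tendsto_metrizable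
      (f := fun (n : ℕ) x => (volume (T ∩ Metric.ball x (1 / ((n : ℝ) + 1)))).toReal
        / (volume (Metric.ball x (1 / ((n : ℝ) + 1)))).toReal) (fun n => ?_) ?_
    · simp only [Measure.addHaar_ball_center volume]
      exact (measurable_volume_inter_ball hTm _).ennreal_toReal.div_const _
    · refine tendsto_pi_nhds.2 fun x => (hχ x).comp ?_
      exact tendsto_nhdsWithin_iff.2 ⟨tendsto_one_div_add_atTop_nhds_zero_nat,
        Eventually.of_forall fun n => Nat.one_div_pos_of_nat (α := ℝ)⟩
  have hχ0 : ∀ x, 0 ≤ χ x := fun x =>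
    ge_of_tendsto' (hχ x) fun ρ => div_nonneg ENNReal.toReal_nonneg ENNReal.toReal_nonneg
  have hχ1 : ∀ x, χ x ≤ 1 := fun x =>
    le_of_tendsto' (hχ x) fun ρ => div_le_one_of_le₀
      (ENNReal.toReal_mono measure_ball_lt_top.ne (measure_mono Set.inter_subset_right))
      ENNReal.toReal_nonneg
  have hint : ∀ v w : ℝ × ℝ, IntervalIntegrable (fun l : ℝ => χ (l • v + w)) volume 0 1 := by
    intro v w
    refine (intervalIntegrable_const (c := (1 : ℝ))).mono_fun ?_ (Eventually.of_forall fun l => ?_)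
    · exact (hχm.comp (f := fun l : ℝ => l • v + w) (by fun_prop)).aestronglyMeasurable
    · simpa [abs_of_nonneg (hχ0 _)] using hχ1 _
  obtain ⟨K, hK⟩ := hTc.isBounded.subset_closedBall 0
  obtain ⟨n, hn⟩ := exists_nat_ge (K + 1 + ‖c2 r‖)
  set F : Finset (ℤ × ℤ) := Finset.Icc (-n : ℤ) n ×ˢ Finset.Icc (-n : ℤ) n with hF
  have hnorm : ∀ i ∉ F, K + 1 + ‖c2 r‖ < ‖c2 i‖ := by
    intro i hi
    refine hn.trans_lt ?_
    by_contra! h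
    apply hi
    simp only [Prod.norm_def, c2, max_le_iff, Real.norm_eq_abs, abs_le] at h
    simp only [hF, Finset.mem_product, Finset.mem_Icc]
    exact_mod_cast h
  have hempty : ∀ i ∉ F, ∀ y : ℝ × ℝ, ‖y‖ ≤ ‖c2 r‖ → ∀ ρ ≤ 1,
      T ∩ Metric.ball (y + c2 i) ρ = ∅ := by
    intro i hi y hy ρ hρ
    refine Set.eq_empty_of_forall_notMem fun z hz => ?_
    have h1 : ‖z‖ ≤ K := by simpa using hK hz.1
    have h2 : ‖z - (y + c2 i)‖ < ρ := by simpa [dist_eq_norm] using hz.2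
    have h3 : ‖c2 i‖ ≤ ‖z‖ + ‖z - (y + c2 i)‖ + ‖y‖ := by
      calc ‖c2 i‖ = ‖z - (z - (y + c2 i)) - y‖ := by congr 1; abel
        _ ≤ _ := (norm_sub_le _ _).trans (by gcongr; exact norm_sub_le _ _)
    linarith [hnorm i hi]
  have hsmall : ∀ᶠ ρ : ℝ in nhdsWithin 0 (Set.Ioi 0), 0 < ρ ∧ ρ ≤ 1 :=
    (eventually_mem_nhdsWithin).and
      (mem_nhdsWithin_of_mem_nhds (Iic_mem_nhds one_pos))
  have hχF : ∀ i ∉ F, ∀ y : ℝ × ℝ, ‖y‖ ≤ ‖c2 r‖ → χ (y + c2 i) = 0 := by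
    intro i hi y hy
    refine tendsto_nhds_unique (hχ _) (tendsto_const_nhds.congr' ?_)
    filter_upwards [hsmall] with ρ hρ
    simp [hempty i hi y hy ρ hρ.2]
  have hsumχ : ∀ y : ℝ × ℝ, ‖y‖ ≤ ‖c2 r‖ →
      ∑ i ∈ F, χ (y + c2 i) + ∑ i ∈ F, χ (-y + c2 i) = 2 * (volume T).toReal := by
    intro y hy
    refine tendsto_nhds_unique ((tendsto_finsetSum F fun i _ => hχ (y + c2 i)).add
      (tendsto_finsetSum F fun i _ => hχ (-y + c2 i))) (tendsto_const_nhds.congr' ?_)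
    filter_upwards [hsmall] with ρ hρ
    have hpos : 0 < (volume (Metric.ball (0 : ℝ × ℝ) ρ)).toReal :=
      ENNReal.toReal_pos (Metric.measure_ball_pos _ _ hρ.1).ne' measure_ball_lt_top.ne
    have hfin : ∀ x, volume (T ∩ Metric.ball x ρ) ≠ ⊤ := fun x =>
      measure_ne_top_of_subset Set.inter_subset_left hTfin
    have h := tsum_volume_inter_ball_add_neg hind hT y ρ
    rw [tsum_eq_sum (s := F) fun i hi => by rw [hempty i hi y hy ρ hρ.2, measure_empty],
      tsum_eq_sum (s := F) fun i hi => by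
        rw [hempty i hi (-y) (by rwa [norm_neg]) ρ hρ.2, measure_empty]] at h
    have h' := congrArg ENNReal.toReal h
    rw [ENNReal.toReal_add (ENNReal.sum_ne_top.2 fun i _ => hfin _)
      (ENNReal.sum_ne_top.2 fun i _ => hfin _), ENNReal.toReal_sum fun i _ => hfin _,
      ENNReal.toReal_sum fun i _ => hfin _, ENNReal.toReal_mul, ENNReal.toReal_mul,
      ENNReal.toReal_ofNat] at h'
    simp only [Measure.addHaar_ball_center volume]
    rw [← Finset.sum_div, ← Finset.sum_div, ← add_div, h', mul_div_cancel_right₀ _ hpos.ne']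
  have hseg : ∀ l ∈ Set.uIcc (0 : ℝ) 1, ‖l • c2 r‖ ≤ ‖c2 r‖ := by
    intro l hl
    rw [Set.uIcc_of_le zero_le_one] at hl
    rw [norm_smul, Real.norm_eq_abs, abs_of_nonneg hl.1]
    exact mul_le_of_le_one_left (norm_nonneg _) hl.2
  have hpos : ∑' i, ∫ l in (0:ℝ)..1, χ ((1 - l) • c2 i + l • c2 (i + r))
      = ∑ i ∈ F, ∫ l in (0:ℝ)..1, χ (l • c2 r + c2 i) := by
    have h : ∀ i (l : ℝ), (1 - l) • c2 i + l • c2 (i + r) = l • c2 r + c2 i := by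
      intro i l; rw [c2_add]; module
    simp only [h]
    refine tsum_eq_sum fun i hi => ?_
    rw [intervalIntegral.integral_congr (g := fun _ => (0 : ℝ)) fun l hl =>
      hχF i hi _ (hseg l hl)]
    simp
  have hneg : ∑' i, ∫ l in (0:ℝ)..1, χ ((1 - l) • c2 i + l • c2 (i + r))
      = ∑ i ∈ F, ∫ l in (0:ℝ)..1, χ (-(l • c2 r) + c2 i) := by
    have h : ∀ i, ∫ l in (0:ℝ)..1, χ ((1 - l) • c2 i + l • c2 (i + r))
        = ∫ l in (0:ℝ)..1, χ (-(l • c2 r) + c2 (i + r)) := by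
      intro i
      have := intervalIntegral.integral_comp_sub_left (a := 0) (b := 1)
        (fun l : ℝ => χ (-(l • c2 r) + c2 (i + r))) 1
      rw [sub_self, sub_zero] at this
      rw [← this]
      congr 1 with l
      rw [c2_add]
      congr 1
      module
    simp only [h]
    refine ((Equiv.addRight r).tsum_eq fun i =>
      ∫ l in (0:ℝ)..1, χ (-(l • c2 r) + c2 i)).trans ?_
    refine tsum_eq_sum fun i hi => ?_
    rw [intervalIntegral.integral_congr (g := fun _ => (0 : ℝ)) fun l hl =>
      hχF i hi _ (by rw [norm_neg]; exact hseg l hl)]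
    simp
  have hint' : ∀ i, IntervalIntegrable (fun l : ℝ => χ (-(l • c2 r) + c2 i)) volume 0 1 := by
    intro i
    simpa using hint (-c2 r) (c2 i)
  have htwo : ∑ i ∈ F, (∫ l in (0:ℝ)..1, χ (l • c2 r + c2 i))
      + ∑ i ∈ F, (∫ l in (0:ℝ)..1, χ (-(l • c2 r) + c2 i)) = 2 * (volume T).toReal := by
    rw [← Finset.sum_add_distrib, Finset.sum_congr rfl fun i _ =>
      (intervalIntegral.integral_add (hint (c2 r) (c2 i)) (hint' i)).symm,
      ← intervalIntegral.integral_finsetSum fun i _ => (hint (c2 r) (c2 i)).add (hint' i),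
      intervalIntegral.integral_congr (g := fun _ => 2 * (volume T).toReal) fun l hl => by
        simpa [Finset.sum_add_distrib] using hsumχ _ (hseg l hl)]
    simp
  linarith
end

section
/- Let Ω_c ⊂ ℝ² be a polygon triangulated by T with all vertices in ℤ², r ∈ ℤ² \ {0}, y ∈ P₁(T), and φ : ℝ² → ℝ continuous. Then ∑_{i∈ℤ²} ⨍_{(i,i+r)} χ_{Ω_c} φ(D_r y) db = ∫_{Ω_c} φ(D_r y) dΩ. -/
open MeasureTheory Filter

/-- The closed triangle with vertices at the lattice points of `T`. -/
noncomputable def tri (T : (ℤ × ℤ) × (ℤ × ℤ) × (ℤ × ℤ)) : Set (ℝ × ℝ) :=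
  convexHull ℝ {c2 T.1, c2 T.2.1, c2 T.2.2}

/-- The density ("angular characteristic") function
`χ_A(x) = lim_{ρ→0} |A ∩ B_ρ(x)|/|B_ρ(x)|`. -/
noncomputable def dens (A : Set (ℝ × ℝ)) (x : ℝ × ℝ) : ℝ :=
  limUnder (nhdsWithin 0 (Set.Ioi (0:ℝ)))
    fun ρ : ℝ => (volume (A ∩ Metric.ball x ρ)).toReal / (volume (Metric.ball x ρ)).toReal

/-- One-sided directional derivative `D_r y (x)` of a vector-valued function. -/
noncomputable def Dr (r : ℝ × ℝ) (y : ℝ × ℝ → ℝ × ℝ) (x : ℝ × ℝ) : ℝ × ℝ :=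
  derivWithin (fun s : ℝ => y (x + s • r)) (Set.Ioi (0 : ℝ)) 0


namespace BondDensity

open scoped ENNReal

/-- The Heaviside function with the symmetric value `1/2` at the origin. -/
noncomputable def heaviside (s : ℝ) : ℝ≥0∞ := if 0 < s then 1 else if s = 0 then 2⁻¹ else 0

/-- The indicator of `[0, 1]` with the value `1/2` at the end points. -/
noncomputable def symInd (s : ℝ) : ℝ≥0∞ := heaviside s * heaviside (1 - s)

/-- The cross product `p ∧ q` as a linear function of `p`. -/
noncomputable def crossLin (q : ℝ × ℝ) : (ℝ × ℝ) →ₗ[ℝ] ℝ :=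
  q.2 • LinearMap.fst ℝ ℝ ℝ - q.1 • LinearMap.snd ℝ ℝ ℝ

/-- Twice the signed area of the triangle `T`. -/
def area2 (T : (ℤ × ℤ) × (ℤ × ℤ) × (ℤ × ℤ)) : ℤ :=
  (T.2.1.1 - T.1.1) * (T.2.2.2 - T.1.2) - (T.2.1.2 - T.1.2) * (T.2.2.1 - T.1.1)

/-- The linear parts of the barycentric coordinates of the triangle `T`. -/
noncomputable def baryLin (T : (ℤ × ℤ) × (ℤ × ℤ) × (ℤ × ℤ)) : Fin 3 → (ℝ × ℝ) →ₗ[ℝ] ℝ :=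
  ![(area2 T : ℝ)⁻¹ • crossLin (c2 T.2.1 - c2 T.2.2),
    (area2 T : ℝ)⁻¹ • crossLin (c2 T.2.2 - c2 T.1),
    (area2 T : ℝ)⁻¹ • crossLin (c2 T.1 - c2 T.2.1)]

/-- The barycentric coordinates of the triangle `T`. -/
noncomputable def bary (T : (ℤ × ℤ) × (ℤ × ℤ) × (ℤ × ℤ)) (k : Fin 3) (x : ℝ × ℝ) : ℝ :=
  (if k = 0 then 1 else 0) + baryLin T k (x - c2 T.1)

/-- A representative of the density of `tri T`, correct away from the vertices. -/
noncomputable def weight (T : (ℤ × ℤ) × (ℤ × ℤ) × (ℤ × ℤ)) (x : ℝ × ℝ) : ℝ≥0∞ :=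
  symInd (bary T 1 x) * symInd (bary T 2 x) * heaviside (bary T 0 x)

variable {T : (ℤ × ℤ) × (ℤ × ℤ) × (ℤ × ℤ)}

lemma crossLin_apply (q p : ℝ × ℝ) : crossLin q p = p.1 * q.2 - p.2 * q.1 := by
  simp [crossLin, mul_comm]

lemma bary_zero (x : ℝ × ℝ) : bary T 0 x = 1 - bary T 1 x - bary T 2 x := by
  simp [bary, baryLin, crossLin_apply]; ring

lemma bary_add (k : Fin 3) (x z : ℝ × ℝ) : bary T k (x + z) = bary T k x + baryLin T k z := by
  rw [bary, bary, add_sub_right_comm, map_add, add_assoc]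

lemma continuous_bary (k : Fin 3) : Continuous (bary T k) := by
  have := (baryLin T k).continuous_of_finiteDimensional
  unfold bary
  fun_prop

lemma measurable_heaviside : Measurable heaviside :=
  Measurable.ite measurableSet_Ioi measurable_const
    (Measurable.ite (measurableSet_singleton 0) measurable_const measurable_const)

lemma measurable_symInd : Measurable symInd :=
  measurable_heaviside.mul (measurable_heaviside.comp (measurable_const.sub measurable_id))

lemma measurable_weight : Measurable (weight T) :=
  ((measurable_symInd.comp (continuous_bary 1).measurable).mul
    (measurable_symInd.comp (continuous_bary 2).measurable)).mul
    (measurable_heaviside.comp (continuous_bary 0).measurable)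

lemma heaviside_of_pos {s : ℝ} (h : 0 < s) : heaviside s = 1 := by simp [heaviside, h]

lemma heaviside_zero : heaviside 0 = 2⁻¹ := by simp [heaviside]

lemma heaviside_of_neg {s : ℝ} (h : s < 0) : heaviside s = 0 := by
  simp [heaviside, h.not_gt, h.ne]

lemma heaviside_le_one (s : ℝ) : heaviside s ≤ 1 := by
  unfold heaviside; split_ifs <;> simp

lemma heaviside_add_neg (s : ℝ) : heaviside s + heaviside (-s) = 1 := by
  rcases lt_trichotomy s 0 with h | rfl | h
  · rw [heaviside_of_neg h, heaviside_of_pos (neg_pos.2 h), zero_add]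
  · rw [neg_zero, heaviside_zero, ENNReal.inv_two_add_inv_two]
  · rw [heaviside_of_pos h, heaviside_of_neg (neg_neg_iff_pos.2 h), add_zero]

lemma symInd_one_sub (s : ℝ) : symInd (1 - s) = symInd s := by
  rw [symInd, symInd, sub_sub_cancel, mul_comm]

lemma symInd_le_one (s : ℝ) : symInd s ≤ 1 :=
  mul_le_one' (heaviside_le_one _) (heaviside_le_one _)

lemma weight_le_one (x : ℝ × ℝ) : weight T x ≤ 1 :=
  mul_le_one' (mul_le_one' (symInd_le_one _) (symInd_le_one _)) (heaviside_le_one _)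

lemma tsum_symInd_add_int (a : ℝ) : ∑' m : ℤ, symInd (a + m) = 1 := by
  have h0 := Int.floor_le a
  have h1 := Int.lt_floor_add_one a
  have hz : ∀ m ∉ ({-⌊a⌋, -⌊a⌋ + 1} : Finset ℤ), symInd (a + m) = 0 := by
    intro m hm
    simp only [Finset.mem_insert, Finset.mem_singleton, not_or] at hm
    rcases lt_or_gt_of_ne hm.1 with h | h
    · have : (m : ℝ) ≤ -⌊a⌋ - 1 := by exact_mod_cast Int.le_sub_one_of_lt h
      rw [symInd, heaviside_of_neg (by linarith), zero_mul]
    · have : (m : ℝ) ≥ -⌊a⌋ + 2 := by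
        have : m ≥ -⌊a⌋ + 2 := by omega
        exact_mod_cast this
      rw [symInd, heaviside_of_neg (s := 1 - _) (by linarith), mul_zero]
  rw [tsum_eq_sum hz, Finset.sum_pair (by simp)]
  push_cast
  rcases h0.eq_or_lt with h | h
  · rw [symInd, symInd, h]
    simp [heaviside, ENNReal.inv_two_add_inv_two]
  · rw [symInd, symInd, heaviside_of_pos (by linarith), heaviside_of_pos (by linarith),
      heaviside_of_neg (s := 1 - (a + _)) (by linarith), mul_zero, add_zero, mul_one]

lemma weight_add_weight_reflect (hT : area2 T ≠ 0) (x : ℝ × ℝ) :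
    weight T x + weight T (c2 (T.2.1 + T.2.2) - x) = symInd (bary T 1 x) * symInd (bary T 2 x) := by
  have hD : (area2 T : ℝ) ≠ 0 := by exact_mod_cast hT
  have e1 : bary T 1 (c2 (T.2.1 + T.2.2) - x) = 1 - bary T 1 x := by
    simp [bary, baryLin, crossLin_apply, c2]
    field_simp
    simp [area2]
    ring
  have e2 : bary T 2 (c2 (T.2.1 + T.2.2) - x) = 1 - bary T 2 x := by
    simp [bary, baryLin, crossLin_apply, c2]
    field_simp
    simp [area2]
    ring
  have e0 : bary T 0 (c2 (T.2.1 + T.2.2) - x) = - bary T 0 x := by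
    rw [bary_zero, bary_zero, e1, e2]; ring
  rw [weight, weight, e0, e1, e2, symInd_one_sub, symInd_one_sub, ← mul_add, heaviside_add_neg,
    mul_one]

/-- The edge map `(m, n) ↦ m (b - a) + n (c - a)` of the lattice triangle `T = (a, b, c)`. -/
def edgeMap (T : (ℤ × ℤ) × (ℤ × ℤ) × (ℤ × ℤ)) : (ℤ × ℤ) →ₗ[ℤ] (ℤ × ℤ) :=
  (LinearMap.fst ℤ ℤ ℤ).smulRight (T.2.1 - T.1) + (LinearMap.snd ℤ ℤ ℤ).smulRight (T.2.2 - T.1)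

lemma edgeMap_apply (m : ℤ × ℤ) : edgeMap T m = m.1 • (T.2.1 - T.1) + m.2 • (T.2.2 - T.1) := rfl

lemma det_edgeMap : LinearMap.det (edgeMap T) = area2 T := by
  rw [← LinearMap.det_toMatrix (Module.Basis.finTwoProd ℤ), Matrix.det_fin_two]
  simp [LinearMap.toMatrix_apply, edgeMap_apply, area2]
  ring

lemma baryLin_one_edgeMap (hT : area2 T ≠ 0) (m : ℤ × ℤ) :
    baryLin T 1 (c2 (edgeMap T m)) = m.1 := by
  have hD : (area2 T : ℝ) ≠ 0 := by exact_mod_cast hT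
  simp [baryLin, crossLin_apply, c2, edgeMap_apply]
  field_simp
  simp [area2]
  ring

lemma baryLin_two_edgeMap (hT : area2 T ≠ 0) (m : ℤ × ℤ) :
    baryLin T 2 (c2 (edgeMap T m)) = m.2 := by
  have hD : (area2 T : ℝ) ≠ 0 := by exact_mod_cast hT
  simp [baryLin, crossLin_apply, c2, edgeMap_apply]
  field_simp
  simp [area2]
  ring

lemma c2_add (i j : ℤ × ℤ) : c2 (i + j) = c2 i + c2 j := by simp [c2]

lemma c2_sub (i j : ℤ × ℤ) : c2 (i - j) = c2 i - c2 j := by simp [c2]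

lemma edgeMap_injective (hT : area2 T ≠ 0) : Function.Injective (edgeMap T) := fun m n h => by
  have h1 := baryLin_one_edgeMap hT m
  have h2 := baryLin_two_edgeMap hT m
  rw [h, baryLin_one_edgeMap hT] at h1
  rw [h, baryLin_two_edgeMap hT] at h2
  exact Prod.ext (by exact_mod_cast h1.symm) (by exact_mod_cast h2.symm)

lemma card_quotient_range_edgeMap (hT : area2 T ≠ 0) :
    Nat.card ((ℤ × ℤ) ⧸ LinearMap.range (edgeMap T)) = (area2 T).natAbs := by
  rw [← Submodule.natAbs_det_equiv _ (LinearEquiv.ofInjective _ (edgeMap_injective hT)),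
    ← det_edgeMap]
  rfl

lemma tsum_parallelogram (hT : area2 T ≠ 0) (x : ℝ × ℝ) :
    ∑' i : ℤ × ℤ, symInd (bary T 1 (c2 i + x)) * symInd (bary T 2 (c2 i + x)) =
      (area2 T).natAbs := by
  set N := LinearMap.range (edgeMap T)
  have hbij : Function.Bijective
      (fun q : ((ℤ × ℤ) ⧸ N) × (ℤ × ℤ) => q.1.out + edgeMap T q.2) := by
    constructor
    · rintro ⟨q, m⟩ ⟨q', m'⟩ h
      dsimp only at h
      have hq : q = q' := by
        have := congrArg N.mkQ h
        rw [map_add, map_add] at this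
        simpa [N, Submodule.mkQ_apply,
          (Submodule.Quotient.mk_eq_zero _).2 (LinearMap.mem_range_self (edgeMap T) _)] using this
      subst hq
      rw [edgeMap_injective hT (add_left_cancel h)]
    · intro i
      have : i - (N.mkQ i).out ∈ N := by
        rw [← Submodule.Quotient.mk_eq_zero, Submodule.Quotient.mk_sub]
        simp
      obtain ⟨m, hm⟩ := this
      exact ⟨(N.mkQ i, m), by simp [hm]⟩
  rw [← (Equiv.ofBijective _ hbij).tsum_eq, ENNReal.tsum_prod']
  have : ∀ q : (ℤ × ℤ) ⧸ N, ∑' m : ℤ × ℤ,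
      symInd (bary T 1 (c2 (Equiv.ofBijective _ hbij (q, m)) + x)) *
        symInd (bary T 2 (c2 (Equiv.ofBijective _ hbij (q, m)) + x)) = 1 := by
    intro q
    simp only [Equiv.ofBijective_apply, c2_add, add_right_comm _ _ x]
    simp only [bary_add, baryLin_one_edgeMap hT, baryLin_two_edgeMap hT]
    simp only [← bary_add]
    rw [ENNReal.tsum_prod']
    simp only [ENNReal.tsum_mul_left, tsum_symInd_add_int, mul_one]
  simp only [this, ← card_quotient_range_edgeMap hT]
  have : Finite ((ℤ × ℤ) ⧸ N) := Nat.finite_of_card_ne_zero (by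
    rw [card_quotient_range_edgeMap hT]; simpa using hT)
  have := Fintype.ofFinite ((ℤ × ℤ) ⧸ N)
  simp [tsum_fintype, N]

lemma setLIntegral_Icc_one_sub (f : ℝ → ℝ≥0∞) :
    ∫⁻ l in Set.Icc (0:ℝ) 1, f (1 - l) = ∫⁻ l in Set.Icc (0:ℝ) 1, f l := by
  rw [← lintegral_indicator measurableSet_Icc, ← lintegral_indicator measurableSet_Icc,
    ← lintegral_sub_left_eq_self _ (1 : ℝ)]
  congr 1 with l
  simp only [Set.indicator_apply, Set.mem_Icc]
  rw [sub_sub_cancel]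
  congr 1
  exact propext ⟨fun h => ⟨by linarith, by linarith⟩, fun h => ⟨by linarith, by linarith⟩⟩

/-- The bond-density lemma for a single lattice triangle. -/
lemma tsum_lintegral_weight (hT : area2 T ≠ 0) (r : ℤ × ℤ) :
    ∑' i : ℤ × ℤ, ∫⁻ l in Set.Icc (0:ℝ) 1, weight T (c2 i + l • c2 r) =
      (area2 T).natAbs / 2 := by
  have hm : ∀ i, Measurable fun l : ℝ => c2 i + l • c2 r := fun i => by fun_prop
  have hrefl : ∑' i : ℤ × ℤ, ∫⁻ l in Set.Icc (0:ℝ) 1,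
      weight T (c2 (T.2.1 + T.2.2) - (c2 i + l • c2 r)) =
      ∑' i : ℤ × ℤ, ∫⁻ l in Set.Icc (0:ℝ) 1, weight T (c2 i + l • c2 r) := by
    rw [← (Equiv.subLeft (T.2.1 + T.2.2 - r)).tsum_eq]
    refine tsum_congr fun i => ?_
    rw [← setLIntegral_Icc_one_sub]
    congr 1 with l
    simp only [Equiv.subLeft_apply, c2_sub]
    congr 1
    rw [sub_smul, one_smul]
    abel
  have hsum : (∑' i : ℤ × ℤ, ∫⁻ l in Set.Icc (0:ℝ) 1, weight T (c2 i + l • c2 r)) +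
      ∑' i : ℤ × ℤ, ∫⁻ l in Set.Icc (0:ℝ) 1, weight T (c2 i + l • c2 r) = (area2 T).natAbs := by
    nth_rw 2 [← hrefl]
    have hadd : ∀ i : ℤ × ℤ, (∫⁻ l in Set.Icc (0:ℝ) 1, weight T (c2 i + l • c2 r)) +
        ∫⁻ l in Set.Icc (0:ℝ) 1, weight T (c2 (T.2.1 + T.2.2) - (c2 i + l • c2 r)) =
        ∫⁻ l in Set.Icc (0:ℝ) 1,
          symInd (bary T 1 (c2 i + l • c2 r)) * symInd (bary T 2 (c2 i + l • c2 r)) := fun i => by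
      have hw : Measurable fun l : ℝ => weight T (c2 i + l • c2 r) := measurable_weight.comp (hm i)
      rw [← lintegral_add_left hw]
      exact lintegral_congr fun l => weight_add_weight_reflect hT _
    rw [← ENNReal.tsum_add, tsum_congr hadd]
    have hp : ∀ i : ℤ × ℤ, Measurable fun l : ℝ =>
        symInd (bary T 1 (c2 i + l • c2 r)) * symInd (bary T 2 (c2 i + l • c2 r)) := fun i =>
      (measurable_symInd.comp ((continuous_bary 1).measurable.comp (hm i))).mul
        (measurable_symInd.comp ((continuous_bary 2).measurable.comp (hm i)))
    rw [← lintegral_tsum fun i => (hp i).aemeasurable]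
    simp [tsum_parallelogram hT]
  rw [← hsum, ← mul_two, ENNReal.mul_div_cancel_right (by simp) (by simp)]

lemma sum_bary (x : ℝ × ℝ) : ∑ k, bary T k x = 1 := by
  rw [Fin.sum_univ_three, bary_zero]; ring

lemma sum_bary_smul (hT : area2 T ≠ 0) (x : ℝ × ℝ) :
    ∑ k, bary T k x • (![c2 T.1, c2 T.2.1, c2 T.2.2] : Fin 3 → ℝ × ℝ) k = x := by
  have hD : (area2 T : ℝ) ≠ 0 := by exact_mod_cast hT
  rw [Fin.sum_univ_three, bary_zero]
  ext
  all_goals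
    simp [bary, baryLin, crossLin_apply, c2]
    field_simp
    simp [area2]
    ring

lemma convex_setOf_bary_nonneg : Convex ℝ {x | ∀ k, 0 ≤ bary T k x} := by
  intro x hx z hz s t hs ht hst k
  have : bary T k (s • x + t • z) = s * bary T k x + t * bary T k z := by
    have e : s • x + t • z - c2 T.1 = s • (x - c2 T.1) + t • (z - c2 T.1) := by
      rw [smul_sub, smul_sub, sub_add_sub_comm, ← add_smul, hst, one_smul]
    simp only [bary, e, map_add, map_smul, smul_eq_mul]
    linear_combination (-(if k = 0 then 1 else 0)) * hst
  rw [this]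
  exact add_nonneg (mul_nonneg hs (hx k)) (mul_nonneg ht (hz k))

lemma tri_eq (hT : area2 T ≠ 0) : tri T = {x | ∀ k, 0 ≤ bary T k x} := by
  have hD : (area2 T : ℝ) ≠ 0 := by exact_mod_cast hT
  apply Set.Subset.antisymm
  · refine convexHull_min ?_ convex_setOf_bary_nonneg
    rintro x (rfl | rfl | rfl) k
    · fin_cases k <;> simp [bary]
    · have e1 : bary T 1 (c2 T.2.1) = 1 := by
        simp [bary, baryLin, crossLin_apply, c2]; field_simp; simp [area2]
      have e2 : bary T 2 (c2 T.2.1) = 0 := by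
        simp [bary, baryLin, crossLin_apply, c2]; right; ring
      fin_cases k
      · simp [bary_zero, e1, e2]
      · simp [e1]
      · simp [e2]
    · have e1 : bary T 2 (c2 T.2.2) = 1 := by
        simp [bary, baryLin, crossLin_apply, c2]; field_simp; simp [area2]; ring
      have e2 : bary T 1 (c2 T.2.2) = 0 := by
        simp [bary, baryLin, crossLin_apply, c2]; right; ring
      fin_cases k
      · simp [bary_zero, e1, e2]
      · simp [e2]
      · simp [e1]
  · intro x hx
    rw [← sum_bary_smul hT x]
    refine (convex_convexHull ℝ _).sum_mem (fun k _ => hx k) (sum_bary x) fun k _ => ?_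
    apply subset_convexHull
    fin_cases k <;> simp

lemma area2_ne_zero (h : AffineIndependent ℝ ![c2 T.1, c2 T.2.1, c2 T.2.2]) : area2 T ≠ 0 := by
  intro h0
  rw [affineIndependent_iff] at h
  have hz : ((T.2.1.1 : ℝ) - T.1.1) * (T.2.2.2 - T.1.2) -
      (T.2.1.2 - T.1.2) * (T.2.2.1 - T.1.1) = 0 := by
    have : (area2 T : ℝ) = 0 := by exact_mod_cast h0
    simpa [area2] using this
  have key : ∀ p q : ℝ, p • (c2 T.2.1 - c2 T.1) + q • (c2 T.2.2 - c2 T.1) = 0 →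
      p = 0 ∧ q = 0 := by
    intro p q hpq
    have := h Finset.univ ![-p - q, p, q] (by simp [Fin.sum_univ_three]; ring)
      (by rw [← hpq]; simp [Fin.sum_univ_three, sub_smul, smul_sub]; abel)
    exact ⟨by simpa using this 1 (Finset.mem_univ _), by simpa using this 2 (Finset.mem_univ _)⟩
  have h1 := key (T.2.2.2 - T.1.2) (-(T.2.1.2 - T.1.2)) (by
    ext
    · simp [c2]; linear_combination hz
    · simp [c2]; ring)
  have h2 := key (T.2.2.1 - T.1.1) (-(T.2.1.1 - T.1.1)) (by
    ext
    · simp [c2]; ring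
    · simp [c2]; linear_combination -hz)
  have h3 := key 1 0 (by
    ext
    · simp [c2]; linear_combination -h2.2
    · simp [c2]; linear_combination -h1.2)
  exact one_ne_zero h3.1

lemma isClosed_tri : IsClosed (tri T) :=
  ((Set.toFinite _).isCompact_convexHull ℝ).isClosed

lemma volume_frontier_tri : volume (frontier (tri T)) = 0 :=
  (convex_convexHull ℝ _).addHaar_frontier volume

lemma aedisjoint_tri {T' : (ℤ × ℤ) × (ℤ × ℤ) × (ℤ × ℤ)}
    (h : interior (tri T) ∩ interior (tri T') = ∅) : AEDisjoint volume (tri T) (tri T') := by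
  refine measure_mono_null (t := frontier (tri T) ∪ frontier (tri T')) ?_
    (measure_union_null volume_frontier_tri volume_frontier_tri)
  rintro x ⟨hx, hx'⟩
  by_contra hn
  simp only [Set.mem_union, not_or, isClosed_tri.frontier_eq, Set.mem_sdiff, not_and, not_not] at hn
  exact (h ▸ ⟨hn.1 hx, hn.2 hx'⟩ : x ∈ (∅ : Set (ℝ × ℝ)))

/-- At every barycentric coordinate, `x` is off the corresponding edge line or that line is
parallel to `r`. -/
def Transversal (T : (ℤ × ℤ) × (ℤ × ℤ) × (ℤ × ℤ)) (r x : ℝ × ℝ) : Prop :=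
  ∀ k, bary T k x = 0 → baryLin T k r = 0

lemma eventually_mem_tri (hT : area2 T ≠ 0) {r x : ℝ × ℝ} (h : Transversal T r x)
    (hx : x ∈ tri T) : ∀ᶠ s : ℝ in nhdsWithin 0 (Set.Ioi 0), x + s • r ∈ tri T := by
  rw [tri_eq hT] at hx ⊢
  simp only [Set.mem_ofPred_eq, eventually_all]
  intro k
  rcases (hx k).eq_or_lt with h0 | h0
  · refine Eventually.of_forall fun s => ?_
    rw [bary_add, map_smul, h k h0.symm, ← h0]
    simp
  · apply eventually_nhdsWithin_of_eventually_nhds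
    have hc : Continuous fun s : ℝ => bary T k (x + s • r) :=
      (continuous_bary k).comp (by fun_prop)
    have : ContinuousAt (fun s : ℝ => bary T k (x + s • r)) 0 := hc.continuousAt
    exact (this.eventually_const_lt (u := 0) (by simpa using h0)).mono fun s hs => hs.le

lemma Dr_eq {s : Set (ℝ × ℝ)} {r x c : ℝ × ℝ} {y : ℝ × ℝ → ℝ × ℝ} {A : (ℝ × ℝ) →ₗ[ℝ] (ℝ × ℝ)}
    (hA : ∀ z ∈ s, y z = A z + c) (hx : x ∈ s)
    (h : ∀ᶠ t : ℝ in nhdsWithin 0 (Set.Ioi 0), x + t • r ∈ s) : Dr r y x = A r := by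
  have hd : HasDerivWithinAt (fun t : ℝ => (A x + c) + t • A r) (A r) (Set.Ioi 0) 0 := by
    simpa using (((hasDerivAt_id (0:ℝ)).smul_const (A r)).const_add (A x + c)).hasDerivWithinAt
  refine HasDerivWithinAt.derivWithin (hd.congr_of_eventuallyEq ?_ ?_) (uniqueDiffWithinAt_Ioi 0)
  · filter_upwards [h] with t ht
    rw [hA _ ht, map_add, map_smul]
    abel
  · simp [hA x hx]

lemma volume_linear_level {L : (ℝ × ℝ) →ₗ[ℝ] ℝ} (hL : L ≠ 0) (x : ℝ × ℝ) :
    volume {z | L (z - x) = 0} = 0 := by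
  have := Measure.addHaar_submodule volume (LinearMap.ker L) (by rwa [Ne, LinearMap.ker_eq_top])
  rw [← (measurePreserving_sub_right volume x).measure_preimage
    (LinearMap.ker L).closed_of_finiteDimensional.measurableSet.nullMeasurableSet] at this
  exact this

/-- A half plane occupies half of every ball centred on its boundary. -/
lemma volume_halfPlane_inter_ball {L : (ℝ × ℝ) →ₗ[ℝ] ℝ} (hL : L ≠ 0) (x : ℝ × ℝ) (ρ : ℝ) :
    volume ({z | 0 ≤ L (z - x)} ∩ Metric.ball x ρ) = volume (Metric.ball x ρ) / 2 := by
  have hLc := L.continuous_of_finiteDimensional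
  set P := {z | 0 ≤ L (z - x)} ∩ Metric.ball x ρ
  set N := {z | L (z - x) ≤ 0} ∩ Metric.ball x ρ
  have hN : MeasurableSet N := by
    refine MeasurableSet.inter (IsClosed.measurableSet ?_) measurableSet_ball
    exact isClosed_le (hLc.comp (by fun_prop)) continuous_const
  have hP : MeasurableSet P := by
    refine MeasurableSet.inter (IsClosed.measurableSet ?_) measurableSet_ball
    exact isClosed_le continuous_const (hLc.comp (by fun_prop))
  have hPN : volume P = volume N := by
    rw [← (Measure.measurePreserving_sub_left volume (x + x)).measure_preimage hN.nullMeasurableSet]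
    congr 1
    ext z
    have e : x + x - z - x = -(z - x) := by abel
    simp only [P, N, Set.mem_inter_iff, Set.mem_preimage, Set.mem_ofPred_eq, Metric.mem_ball,
      dist_eq_norm, e, map_neg, norm_neg, neg_nonpos]
  have hunion : P ∪ N = Metric.ball x ρ := by
    rw [← Set.union_inter_distrib_right, Set.inter_eq_right]
    exact fun z _ => le_total 0 (L (z - x))
  have hinter : AEDisjoint volume P N :=
    measure_mono_null (fun z hz => le_antisymm hz.2.1 hz.1.1) (volume_linear_level hL x)
  rw [← hunion, measure_union₀ hN.nullMeasurableSet hinter, ← hPN, ← mul_two,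
    ENNReal.mul_div_cancel_right (by simp) (by simp)]

lemma baryLin_ne_zero (hT : area2 T ≠ 0) (k : Fin 3) : baryLin T k ≠ 0 := by
  have hD : (area2 T : ℝ) ≠ 0 := by exact_mod_cast hT
  have h1 := baryLin_one_edgeMap hT (1, 0)
  have h2 := baryLin_two_edgeMap hT (0, 1)
  have h0 : baryLin T 0 (c2 (edgeMap T (1, 0))) = -1 := by
    simp [baryLin, crossLin_apply, c2, edgeMap_apply]
    field_simp
    simp [area2]
    ring
  intro hk
  fin_cases k <;> simp_all

lemma eq_zero_of_baryLin_eq_zero (hT : area2 T ≠ 0) {r : ℝ × ℝ} (h1 : baryLin T 1 r = 0)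
    (h2 : baryLin T 2 r = 0) : r = 0 := by
  have hD : (area2 T : ℝ) ≠ 0 := by exact_mod_cast hT
  simp [baryLin, crossLin_apply, hD, c2] at h1 h2
  have hA : (area2 T : ℝ) = ((T.2.1.1 : ℝ) - T.1.1) * (T.2.2.2 - T.1.2) -
      (T.2.1.2 - T.1.2) * (T.2.2.1 - T.1.1) := by simp [area2]
  ext
  · apply mul_left_cancel₀ hD
    simp only [hA, Prod.fst_zero]
    linear_combination (T.2.1.1 - T.1.1 : ℝ) * h1 + (T.2.2.1 - T.1.1 : ℝ) * h2
  · apply mul_left_cancel₀ hD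
    simp only [hA, Prod.snd_zero]
    linear_combination (T.2.1.2 - T.1.2 : ℝ) * h1 + (T.2.2.2 - T.1.2 : ℝ) * h2

lemma Transversal.eq_of_bary_eq_zero (hT : area2 T ≠ 0) {r x : ℝ × ℝ} (hr : r ≠ 0)
    (h : Transversal T r x) {j k : Fin 3} (hj : bary T j x = 0) (hk : bary T k x = 0) : j = k := by
  have hs : baryLin T 0 r = - baryLin T 1 r - baryLin T 2 r := by
    simp [baryLin, crossLin_apply]; ring
  have h1 := h j hj
  have h2 := h k hk
  by_contra hjk
  apply hr
  apply eq_zero_of_baryLin_eq_zero hT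
  all_goals fin_cases j <;> fin_cases k <;> simp at h1 h2 hjk ⊢ <;> linarith

/-- The fraction of the ball of radius `ρ` around `x` occupied by `A`. -/
noncomputable def ballRatio (A : Set (ℝ × ℝ)) (x : ℝ × ℝ) (ρ : ℝ) : ℝ :=
  (volume (A ∩ Metric.ball x ρ)).toReal / (volume (Metric.ball x ρ)).toReal

lemma volume_ball_toReal_pos (x : ℝ × ℝ) {ρ : ℝ} (hρ : 0 < ρ) :
    0 < (volume (Metric.ball x ρ)).toReal :=
  ENNReal.toReal_pos (Metric.measure_ball_pos _ _ hρ).ne' measure_ball_lt_top.ne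

lemma tendsto_ballRatio {A B : Set (ℝ × ℝ)} {x : ℝ × ℝ} {d : ℝ≥0∞}
    (hAB : ∀ᶠ z in nhds x, z ∈ A ↔ z ∈ B)
    (hB : ∀ ρ, volume (B ∩ Metric.ball x ρ) = d * volume (Metric.ball x ρ)) :
    Tendsto (ballRatio A x) (nhdsWithin 0 (Set.Ioi 0)) (nhds d.toReal) := by
  obtain ⟨ε, hε, h⟩ := Metric.eventually_nhds_iff_ball.1 hAB
  refine tendsto_const_nhds.congr' ?_
  filter_upwards [Ioo_mem_nhdsGT hε] with ρ hρ
  have hA : A ∩ Metric.ball x ρ = B ∩ Metric.ball x ρ := by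
    ext z
    simp only [Set.mem_inter_iff, and_congr_left_iff]
    exact fun hz => h z (Metric.ball_subset_ball hρ.2.le hz)
  rw [ballRatio, hA, hB, ENNReal.toReal_mul,
    mul_div_cancel_right₀ _ (volume_ball_toReal_pos x hρ.1).ne']

lemma tendsto_ballRatio_tri (hT : area2 T ≠ 0) {r x : ℝ × ℝ} (hr : r ≠ 0)
    (h : Transversal T r x) :
    Tendsto (ballRatio (tri T) x) (nhdsWithin 0 (Set.Ioi 0)) (nhds (weight T x).toReal) := by
  have hpos : ∀ k, 0 < bary T k x → ∀ᶠ z in nhds x, 0 < bary T k z := fun k hk =>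
    (continuous_bary k).continuousAt.eventually_const_lt hk
  have h0 : bary T 0 x = 1 - bary T 1 x - bary T 2 x := bary_zero x
  by_cases hneg : ∃ k, bary T k x < 0
  · obtain ⟨k, hk⟩ := hneg
    have hw : weight T x = 0 := by
      rw [weight, symInd, symInd]
      fin_cases k <;> simp at hk <;> simp [heaviside_of_neg hk]
    rw [hw]
    refine tendsto_ballRatio (B := ∅) ?_ (by simp)
    filter_upwards [(continuous_bary k).continuousAt.eventually_lt_const hk] with z hz
    rw [tri_eq hT]
    exact ⟨fun hz' => absurd (hz' k) hz.not_ge, False.elim⟩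
  push Not at hneg
  by_cases hzero : ∃ k, bary T k x = 0
  · obtain ⟨k, hk⟩ := hzero
    have hother : ∀ j, j ≠ k → 0 < bary T j x := fun j hj =>
      (hneg j).lt_of_ne fun hj' => hj (h.eq_of_bary_eq_zero hT hr hj'.symm hk)
    have hw : weight T x = 2⁻¹ := by
      rw [weight, symInd, symInd]
      fin_cases k
      · have h1 := hother 1 (by simp)
        have h2 := hother 2 (by simp)
        simp only [Fin.zero_eta] at hk
        rw [hk, heaviside_zero, heaviside_of_pos h1, heaviside_of_pos h2,
          heaviside_of_pos (by linarith), heaviside_of_pos (by linarith)]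
        simp
      · have h1 := hother 0 (by simp)
        have h2 := hother 2 (by simp)
        simp only [Fin.mk_one] at hk
        rw [hk, heaviside_zero, heaviside_of_pos h1, heaviside_of_pos h2,
          heaviside_of_pos (by linarith), heaviside_of_pos (by linarith)]
        simp
      · have h1 := hother 0 (by simp)
        have h2 := hother 1 (by simp)
        simp only [Fin.reduceFinMk] at hk
        rw [hk, heaviside_zero, heaviside_of_pos h1, heaviside_of_pos h2,
          heaviside_of_pos (by linarith), heaviside_of_pos (by linarith)]
        simp
    rw [hw]
    refine tendsto_ballRatio (B := {z | 0 ≤ baryLin T k (z - x)}) ?_ fun ρ => by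
      rw [volume_halfPlane_inter_ball (baryLin_ne_zero hT k), ENNReal.div_eq_inv_mul]
    have hall : ∀ᶠ z in nhds x, ∀ j, j ≠ k → 0 < bary T j z := by
      simp only [eventually_all]
      exact fun j hj => hpos j (hother j hj)
    filter_upwards [hall] with z hz
    have hb : bary T k z = baryLin T k (z - x) := by
      rw [← add_sub_cancel x z, bary_add, hk, add_sub_cancel, zero_add]
    rw [tri_eq hT]
    refine ⟨fun hz' => hb ▸ hz' k, fun hz' j => ?_⟩
    by_cases hj : j = k
    · rw [hj, hb]; exact hz'
    · exact (hz j hj).le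
  · push Not at hzero
    have hall : ∀ k, 0 < bary T k x := fun k => (hneg k).lt_of_ne (hzero k).symm
    have hw : weight T x = 1 := by
      have := hall 0
      have := hall 1
      have := hall 2
      rw [weight, symInd, symInd]
      iterate 5 rw [heaviside_of_pos (by linarith)]
      simp
    rw [hw]
    refine tendsto_ballRatio (B := Set.univ) ?_ (by simp)
    have : ∀ᶠ z in nhds x, ∀ k, 0 < bary T k z := by
      simp only [eventually_all]
      exact fun k => hpos k (hall k)
    filter_upwards [this] with z hz
    rw [tri_eq hT]
    exact iff_of_true (fun k => (hz k).le) trivial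

lemma weight_eq_zero (hT : area2 T ≠ 0) {x : ℝ × ℝ} (hx : x ∉ tri T) : weight T x = 0 := by
  rw [tri_eq hT] at hx
  simp only [Set.mem_ofPred_eq, not_forall, not_le] at hx
  obtain ⟨k, hk⟩ := hx
  rw [weight, symInd, symInd]
  fin_cases k <;> simp at hk <;> simp [heaviside_of_neg hk]

/-- The density of a union of almost disjoint triangles, away from edges transversal to `r`. -/
lemma dens_biUnion_tri {𝒯 : Finset ((ℤ × ℤ) × (ℤ × ℤ) × (ℤ × ℤ))}
    (hT : ∀ T ∈ 𝒯, area2 T ≠ 0)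
    (hd : Set.Pairwise (𝒯 : Set _) (Function.onFun (AEDisjoint volume) tri))
    {r x : ℝ × ℝ} (hr : r ≠ 0) (h : ∀ T ∈ 𝒯, Transversal T r x) :
    dens (⋃ T ∈ 𝒯, tri T) x = ∑ T ∈ 𝒯, (weight T x).toReal := by
  refine Tendsto.limUnder_eq (Tendsto.congr (fun ρ => ?_)
    (tendsto_finsetSum 𝒯 fun T hT' => tendsto_ballRatio_tri (hT T hT') hr (h T hT')))
  simp only [ballRatio]
  rw [← Finset.sum_div, Set.iUnion₂_inter, measure_biUnion_finset₀, ENNReal.toReal_sum]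
  · exact fun T _ => measure_ne_top_of_subset Set.inter_subset_right measure_ball_lt_top.ne
  · exact fun T h T' h' hne => (hd h h' hne).mono Set.inter_subset_left Set.inter_subset_left
  · exact fun T _ => (isClosed_tri.measurableSet.inter measurableSet_ball).nullMeasurableSet

lemma measurableSet_stdTriangle :
    MeasurableSet {p : ℝ × ℝ | 0 ≤ p.1 ∧ 0 ≤ p.2 ∧ p.1 + p.2 ≤ 1} := by
  measurability

lemma volume_stdTriangle :
    volume {p : ℝ × ℝ | 0 ≤ p.1 ∧ 0 ≤ p.2 ∧ p.1 + p.2 ≤ 1} = 2⁻¹ := by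
  rw [Measure.volume_eq_prod, Measure.prod_apply measurableSet_stdTriangle]
  have hs : ∀ s : ℝ, volume (Prod.mk s ⁻¹' {p : ℝ × ℝ | 0 ≤ p.1 ∧ 0 ≤ p.2 ∧ p.1 + p.2 ≤ 1}) =
      (Set.Icc 0 1).indicator (fun s => ENNReal.ofReal (1 - s)) s := by
    intro s
    by_cases hs : s ∈ Set.Icc (0:ℝ) 1
    · rw [Set.indicator_of_mem hs, ← sub_zero (1 - s), ← Real.volume_Icc]
      congr 1
      ext t
      simp only [Set.mem_preimage, Set.mem_ofPred_eq, Set.mem_Icc]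
      exact ⟨fun h => ⟨h.2.1, by linarith⟩, fun h => ⟨hs.1, h.1, by linarith⟩⟩
    · rw [Set.indicator_of_notMem hs, ← measure_empty (μ := (volume : Measure ℝ))]
      congr 1
      ext t
      simp only [Set.mem_preimage, Set.mem_ofPred_eq, Set.mem_empty_iff_false, iff_false]
      exact fun h => hs ⟨h.1, by linarith⟩
  simp only [hs]
  rw [lintegral_indicator measurableSet_Icc, ← ofReal_integral_eq_lintegral_ofReal]
  · rw [integral_Icc_eq_integral_Ioc, ← intervalIntegral.integral_of_le zero_le_one]
    rw [intervalIntegral.integral_sub (by simp) (by simp), integral_id]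
    norm_num [ENNReal.ofReal_div_of_pos]
  · exact (Continuous.integrableOn_Icc (by fun_prop))
  · filter_upwards [ae_restrict_mem measurableSet_Icc] with s hs
    simpa using hs.2

lemma volume_tri (hT : area2 T ≠ 0) : volume (tri T) = (area2 T).natAbs / 2 := by
  have hD : (area2 T : ℝ) ≠ 0 := by exact_mod_cast hT
  set f : (ℝ × ℝ) →ₗ[ℝ] (ℝ × ℝ) := (baryLin T 1).prod (baryLin T 2)
  have hdet : LinearMap.det f = (area2 T : ℝ)⁻¹ := by
    rw [← LinearMap.det_toMatrix (Module.Basis.finTwoProd ℝ), Matrix.det_fin_two]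
    simp [LinearMap.toMatrix_apply, f, baryLin, crossLin_apply, c2]
    field_simp
    simp [area2]
    ring
  have he : tri T = (fun x => x - c2 T.1) ⁻¹'
      (f ⁻¹' {p : ℝ × ℝ | 0 ≤ p.1 ∧ 0 ≤ p.2 ∧ p.1 + p.2 ≤ 1}) := by
    ext x
    have e1 : bary T 1 x = baryLin T 1 (x - c2 T.1) := by simp [bary]
    have e2 : bary T 2 x = baryLin T 2 (x - c2 T.1) := by simp [bary]
    rw [tri_eq hT]
    change (∀ k, 0 ≤ bary T k x) ↔ 0 ≤ baryLin T 1 (x - c2 T.1) ∧ 0 ≤ baryLin T 2 (x - c2 T.1) ∧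
      baryLin T 1 (x - c2 T.1) + baryLin T 2 (x - c2 T.1) ≤ 1
    have h0 := bary_zero (T := T) x
    rw [← e1, ← e2]
    refine ⟨fun h => ⟨h 1, h 2, by linarith [h 0]⟩, fun h k => ?_⟩
    fin_cases k
    · exact h0 ▸ by linarith
    · exact h.1
    · exact h.2.1
  rw [he, (measurePreserving_sub_right volume (c2 T.1)).measure_preimage,
    Measure.addHaar_preimage_linearMap _ (by rw [hdet]; exact inv_ne_zero hD), volume_stdTriangle,
    hdet, inv_inv, div_eq_mul_inv, ← Int.cast_abs, Int.abs_eq_natAbs, Int.cast_natCast,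
    ENNReal.ofReal_natCast]
  · exact (f.continuous_of_finiteDimensional.measurable
      measurableSet_stdTriangle).nullMeasurableSet

lemma ae_transversal (x r : ℝ × ℝ) : ∀ᵐ l : ℝ, Transversal T r (x + l • r) := by
  refine ae_all_iff.2 fun k => ?_
  by_cases hk : baryLin T k r = 0
  · exact Eventually.of_forall fun _ _ => hk
  · filter_upwards [Measure.ae_ne volume (-bary T k x / baryLin T k r)] with l hl h
    rw [bary_add, map_smul, smul_eq_mul] at h
    exact absurd ((eq_div_iff hk).2 (by linarith)) hl

lemma integral_weight_toReal (x r : ℝ × ℝ) :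
    ∫ l in (0:ℝ)..1, (weight T (x + l • r)).toReal =
      (∫⁻ l in Set.Icc (0:ℝ) 1, weight T (x + l • r)).toReal := by
  rw [intervalIntegral.integral_of_le zero_le_one, ← integral_Icc_eq_integral_Ioc]
  refine integral_toReal (measurable_weight.comp (by fun_prop)).aemeasurable ?_
  exact Eventually.of_forall fun l => (weight_le_one _).trans_lt ENNReal.one_lt_top

lemma intervalIntegrable_weight (x r : ℝ × ℝ) :
    IntervalIntegrable (fun l : ℝ => (weight T (x + l • r)).toReal) volume 0 1 := by
  refine (intervalIntegrable_const (c := (1:ℝ))).mono_fun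
    (measurable_weight.comp (by fun_prop)).ennreal_toReal.aestronglyMeasurable ?_
  refine Eventually.of_forall fun l => ?_
  simpa using ENNReal.toReal_mono ENNReal.one_ne_top (weight_le_one (T := T) (x + l • r))

lemma hasSum_integral_weight (hT : area2 T ≠ 0) (r : ℤ × ℤ) :
    HasSum (fun i : ℤ × ℤ => ∫ l in (0:ℝ)..1, (weight T (c2 i + l • c2 r)).toReal)
      (volume (tri T)).toReal := by
  have h := tsum_lintegral_weight hT r
  rw [← volume_tri hT] at h
  simp only [integral_weight_toReal, ← h]
  have hne : ∑' i : ℤ × ℤ, ∫⁻ l in Set.Icc (0:ℝ) 1, weight T (c2 i + l • c2 r) ≠ ∞ := by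
    rw [h, volume_tri hT]
    exact ENNReal.div_ne_top (ENNReal.natCast_ne_top _) (by simp)
  rw [ENNReal.tsum_toReal_eq (ENNReal.ne_top_of_tsum_ne_top hne)]
  exact ENNReal.hasSum_toReal hne

lemma restrict_biUnion_tri {𝒯 : Finset ((ℤ × ℤ) × (ℤ × ℤ) × (ℤ × ℤ))}
    (hd : Set.Pairwise (𝒯 : Set _) (Function.onFun (AEDisjoint volume) tri)) :
    volume.restrict (⋃ T ∈ 𝒯, tri T) = ∑ T ∈ 𝒯, volume.restrict (tri T) := by
  ext s hs
  rw [Measure.restrict_apply hs, Set.inter_iUnion₂, measure_biUnion_finset₀,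
    Measure.finsetSum_apply]
  · simp only [Measure.restrict_apply hs]
  · exact fun T h T' h' hne => (hd h h' hne).mono Set.inter_subset_right Set.inter_subset_right
  · exact fun T _ => (hs.inter isClosed_tri.measurableSet).nullMeasurableSet

end BondDensity

open BondDensity

/-- Let `Ω_c ⊂ ℝ²` be a polygon triangulated by nondegenerate triangles with vertices in
`ℤ²`, let `r ∈ ℤ² \ {0}`, let `y` be continuous and piecewise affine on the triangulation,
and let `φ` be continuous.  Then
`∑_{i∈ℤ²} ⨍_{(i,i+r)} χ_{Ω_c} φ(D_r y) db = ∫_{Ω_c} φ(D_r y) dΩ`. -/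
theorem bond_sum_eq_integral_2d
    (𝒯 : Finset ((ℤ × ℤ) × (ℤ × ℤ) × (ℤ × ℤ)))
    (Ωc : Set (ℝ × ℝ)) (hΩc : Ωc = ⋃ T ∈ 𝒯, tri T)
    (hnd : ∀ T ∈ 𝒯, AffineIndependent ℝ ![c2 T.1, c2 T.2.1, c2 T.2.2])
    (hdisj : ∀ T ∈ 𝒯, ∀ T' ∈ 𝒯, T ≠ T' → interior (tri T) ∩ interior (tri T') = ∅)
    (r : ℤ × ℤ) (hr : r ≠ 0)
    (y : ℝ × ℝ → ℝ × ℝ) (hy : Continuous y)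
    (haff : ∀ T ∈ 𝒯, ∃ A : (ℝ × ℝ) →ₗ[ℝ] (ℝ × ℝ), ∃ c : ℝ × ℝ,
      ∀ x ∈ tri T, y x = A x + c)
    (φ : ℝ × ℝ → ℝ) (hφ : Continuous φ) :
    ∑' i : ℤ × ℤ,
        ∫ l in (0:ℝ)..1,
          dens Ωc (c2 i + l • c2 r) * φ (Dr (c2 r) y (c2 i + l • c2 r))
      = ∫ x in Ωc, φ (Dr (c2 r) y x) := by
  have hD : ∀ T ∈ 𝒯, area2 T ≠ 0 := fun T hT => area2_ne_zero (hnd T hT)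
  have hd : Set.Pairwise (𝒯 : Set _) (Function.onFun (AEDisjoint volume) tri) :=
    fun T hT T' hT' hne => aedisjoint_tri (hdisj T hT T' hT' hne)
  have hr0 : c2 r ≠ 0 := fun h => hr (by simpa [c2, Prod.ext_iff] using h)
  choose! A c hA using haff
  have hbond : ∀ i : ℤ × ℤ, ∫ l in (0:ℝ)..1,
      dens Ωc (c2 i + l • c2 r) * φ (Dr (c2 r) y (c2 i + l • c2 r)) =
      ∑ T ∈ 𝒯, (∫ l in (0:ℝ)..1, (weight T (c2 i + l • c2 r)).toReal) * φ (A T (c2 r)) := by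
    intro i
    simp only [← intervalIntegral.integral_mul_const]
    rw [← intervalIntegral.integral_finsetSum fun T _ =>
      (intervalIntegrable_weight _ _).mul_const _]
    refine intervalIntegral.integral_congr_ae ?_
    have hae : ∀ᵐ l : ℝ, ∀ T ∈ 𝒯, Transversal T (c2 r) (c2 i + l • c2 r) :=
      (ae_ball_iff 𝒯.countable_toSet).2 fun T _ => ae_transversal _ _
    filter_upwards [hae] with l hl _
    rw [hΩc, dens_biUnion_tri hD hd hr0 hl, Finset.sum_mul]
    refine Finset.sum_congr rfl fun T hT => ?_
    by_cases hx : c2 i + l • c2 r ∈ tri T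
    · rw [Dr_eq (hA T hT) hx (eventually_mem_tri (hD T hT) (hl T hT) hx)]
    · rw [weight_eq_zero (hD T hT) hx, ENNReal.toReal_zero, zero_mul, zero_mul]
  have htri : ∀ T ∈ 𝒯, (fun x => φ (Dr (c2 r) y x)) =ᵐ[volume.restrict (tri T)]
      fun _ => φ (A T (c2 r)) := by
    intro T hT
    filter_upwards [ae_restrict_mem isClosed_tri.measurableSet,
      ae_restrict_of_ae (measure_eq_zero_iff_ae_notMem.1 volume_frontier_tri)] with x hx hfr
    have hint : x ∈ interior (tri T) := by
      by_contra h
      rw [isClosed_tri.frontier_eq] at hfr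
      exact hfr ⟨hx, h⟩
    rw [Dr_eq (hA T hT) hx]
    have hc : ContinuousAt (fun s : ℝ => x + s • c2 r) 0 := by fun_prop
    exact eventually_nhdsWithin_of_eventually_nhds
      (hc.eventually (by simpa using mem_interior_iff_mem_nhds.1 hint))
  have hfin : ∀ T ∈ 𝒯, volume (tri T) ≠ ⊤ := fun T _ =>
    ((Set.toFinite _).isCompact_convexHull ℝ).measure_lt_top.ne
  simp only [hbond]
  rw [(hasSum_sum fun T hT =>
    (hasSum_integral_weight (hD T hT) r).mul_right (φ (A T (c2 r)))).tsum_eq, hΩc,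
    restrict_biUnion_tri hd, integral_finsetSum_measure]
  · refine Finset.sum_congr rfl fun T hT => ?_
    rw [integral_congr_ae (htri T hT), setIntegral_const, smul_eq_mul, measureReal_def]
  · intro T hT
    exact (integrableOn_const (hfin T hT)).congr (htri T hT).symm
end
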